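/- Work in ℝ³ with Γ = {(x,y,z) : x = 0} and Ω = {(x,y,z) : z = 0}, fix p = (p₁,p₂,p₃) with p₁ > 0 and p₃ > 0, let f be the central projection from Γ to Ω through p, and let v₀ = (0,p₂,p₃) be the orthogonal projection of p onto Γ. Then every affine line L contained in Γ that passes through v₀ and is distinct from the vanishing line {(0,y,p₃) : y ∈ ℝ} is mapped by f into an affine line of Ω parallel to the x-axis; consequently, the image lines of all such lines through v₀ are pairwise parallel. -/

import Mathlib

noncomputable section

/-- Points of `ℝ³`; coordinate `0` is `x`, coordinate `1` is `y`, coordinate `2` is `z`. -/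
abbrev E3 : Type := Fin 3 → ℝ

/-- An affine line in `ℝ³`: a nonempty affine subspace whose direction has dimension 1. -/
def IsLine (s : AffineSubspace ℝ E3) : Prop :=
  (s : Set E3).Nonempty ∧ Module.finrank ℝ s.direction = 1

/-- `f` is the central projection through `p` from the plane `Γ = {x = 0}` to the plane
`Ω = {z = 0}`: every point `a` of `Γ` whose `z`-coordinate differs from that of `p`
(i.e. every non-vanishing point of `Γ`) is sent to the (unique) intersection point of the
line through `p` and `a` with `Ω`. -/
def IsCentralProjC (p : E3) (f : E3 → E3) : Prop :=
  ∀ a : E3, a 0 = 0 → a 2 ≠ p 2 →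
    (f a) 2 = 0 ∧ ∃ t : ℝ, f a = p + t • (a - p)

/-- With `Γ = {x = 0}`, `Ω = {z = 0}` and `p = (p₁, p₂, p₃)`, `p₁, p₃ > 0`: every affine
line `L ⊆ Γ` through `v₀ = (0, p₂, p₃)` distinct from the vanishing line
`{(0, y, p₃) : y ∈ ℝ}` of `Γ` is mapped by the central projection `f` into an affine line
of `Ω` parallel to the `x`-axis, i.e. onto points with `z = 0` and a common
`y`-coordinate; consequently the image lines of all such lines are pairwise parallel. -/
theorem centralProj_lines_through_v0
    (p : E3) (hp1 : 0 < p 0) (hp3 : 0 < p 2)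
    (f : E3 → E3) (hf : IsCentralProjC p f)
    (L : AffineSubspace ℝ E3) (hL : IsLine L)
    (hLΓ : ∀ x ∈ L, x 0 = 0)
    (hv0 : (![0, p 1, p 2] : E3) ∈ L)
    (hLn : (L : Set E3) ≠ {v : E3 | v 0 = 0 ∧ v 2 = p 2}) :
    ∃ c : ℝ, ∀ x ∈ L, x 2 ≠ p 2 → (f x) 1 = c ∧ (f x) 2 = 0 := by
  obtain ⟨d, -, hd⟩ := finrank_eq_one_iff'.mp hL.2
  refine ⟨p 1 - p 2 * (d : E3) 1 / (d : E3) 2, fun x hx hx2 => ?_⟩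
  obtain ⟨hz, t, ht⟩ := hf x (hLΓ x hx) hx2
  refine ⟨?_, hz⟩
  obtain ⟨s, hs⟩ := hd ⟨x -ᵥ ![0, p 1, p 2], AffineSubspace.vsub_mem_direction hx hv0⟩
  have hs' : s • (d : E3) = x - ![0, p 1, p 2] := congrArg Subtype.val hs
  have h1 : s * (d : E3) 1 = x 1 - p 1 := by simpa using congrFun hs' 1
  have h2 : s * (d : E3) 2 = x 2 - p 2 := by simpa using congrFun hs' 2
  have hd2 : (d : E3) 2 ≠ 0 := by
    intro h
    rw [h, mul_zero] at h2
    exact hx2 (by linarith)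
  have f1 : f x 1 = p 1 + t * (x 1 - p 1) := by simpa using congrFun ht 1
  have f2 : f x 2 = p 2 + t * (x 2 - p 2) := by simpa using congrFun ht 2
  rw [hz, ← h2] at f2
  rw [f1, ← h1]
  field_simp
  linear_combination (-(d : E3) 1) * f2
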